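/- Let 𝔄 be an abelian category and D an object with a chain of subobjects 0 = F₀D ≤ F₁D ≤ ⋯ ≤ F_lD = D; write gr_j = F_jD/F_{j−1}D for 1 ≤ j ≤ l. Fix 1 ≤ i ≤ l and assume Hom(gr_j, gr_i) = 0 for all 1 ≤ j < i. Then precomposition with the projection F_iD ↠ gr_i induces a bijection Hom(gr_i, gr_i) ≅ Hom(F_iD, gr_i). In particular, if 𝔄 is C-linear over a field C and Hom(gr_i, gr_i) is one-dimensional over C, then Hom(F_iD, gr_i) is one-dimensional over C. -/

import Mathlib

open CategoryTheory CategoryTheory.Limits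

/-- The `j`-th graded piece `F_{j+1}D / F_jD` of a chain of subobjects. -/
noncomputable def stmtGr {𝒜 : Type*} [Category 𝒜] [Abelian 𝒜] {D : 𝒜} {l : ℕ}
    (F : Fin (l + 1) → Subobject D) (hmono : Monotone F) (j : Fin l) : 𝒜 :=
  cokernel (Subobject.ofLE (F j.castSucc) (F j.succ) (hmono (Fin.castSucc_le_succ j)))

/-!
Precomposition with an epimorphism is injective, so only surjectivity is at stake: a map out of
`F_iD` descends to `gr_i` as soon as it vanishes on `F_{i−1}D`. Since `F_{i−1}D` is an iterated
extension of the `gr_j` with `j < i`, it has no nonzero maps to any object that receives none from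
these `gr_j`.
-/

section Cokernel

variable {𝒞 : Type*} [Category 𝒞] [HasZeroMorphisms 𝒞] {X Y Z : 𝒞} (f : X ⟶ Y) [HasCokernel f]

theorem bijective_cokernel_π_comp (hf : ∀ g : Y ⟶ Z, f ≫ g = 0) :
    Function.Bijective (fun φ : cokernel f ⟶ Z => cokernel.π f ≫ φ) :=
  ⟨fun _ _ h => (cancel_epi (cokernel.π f)).1 h,
    fun g => ⟨cokernel.desc f g (hf g), cokernel.π_desc f g (hf g)⟩⟩

theorem hom_eq_zero_of_cokernel_hom_eq_zero (hX : ∀ g : X ⟶ Z, g = 0)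
    (hcoker : ∀ φ : cokernel f ⟶ Z, φ = 0) (g : Y ⟶ Z) : g = 0 := by
  rw [← cokernel.π_desc f g (hX _), hcoker (cokernel.desc f g _), comp_zero]

end Cokernel

section Filtration

variable {𝒜 : Type*} [Category 𝒜] [Abelian 𝒜] {D Z : 𝒜} {l : ℕ}
  (F : Fin (l + 1) → Subobject D) (hmono : Monotone F)

theorem hom_eq_zero_of_stmtGr_hom_eq_zero (h0 : F 0 = ⊥) (k : Fin (l + 1))
    (hgr : ∀ j : Fin l, j.castSucc < k → ∀ f : stmtGr F hmono j ⟶ Z, f = 0)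
    (g : (F k : 𝒜) ⟶ Z) : g = 0 := by
  induction k using Fin.induction with
  | zero =>
    have hzero : IsZero (F 0 : 𝒜) := by
      rw [h0]
      exact (isZero_zero 𝒜).of_iso Subobject.botCoeIsoZero
    exact hzero.eq_of_src g 0
  | succ j ih =>
    have hprev : ∀ g' : (F j.castSucc : 𝒜) ⟶ Z, g' = 0 :=
      ih fun j' hj' => hgr j' (hj'.trans Fin.castSucc_lt_succ)
    exact hom_eq_zero_of_cokernel_hom_eq_zero _ hprev (hgr j Fin.castSucc_lt_succ) g

theorem stmt8_general (R : Type*) [Semiring R] [Linear R 𝒜] (h0 : F 0 = ⊥) (i : Fin l)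
    (hvanish : ∀ j : Fin l, j < i → ∀ f : stmtGr F hmono j ⟶ Z, f = 0) :
    Function.Bijective (Linear.leftComp R Z (cokernel.π (Subobject.ofLE (F i.castSucc) (F i.succ)
      (hmono (Fin.castSucc_le_succ i))))) :=
  bijective_cokernel_π_comp _ fun _ =>
    hom_eq_zero_of_stmtGr_hom_eq_zero F hmono h0 i.castSucc
      (fun j hj => hvanish j (Fin.castSucc_lt_castSucc_iff.1 hj)) _

end Filtration

/-- Let `𝒜` be a (`C`-linear) abelian category and `D` an object with a chain of
subobjects `0 = F₀D ≤ ⋯ ≤ F_lD = D`; write `gr_j = F_jD/F_{j−1}D`.  Fix `i` and assume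
`Hom(gr_j, gr_i) = 0` for all `j < i`.  Then precomposition with the projection
`F_iD ↠ gr_i` induces a bijection `Hom(gr_i, gr_i) ≅ Hom(F_iD, gr_i)`.  In particular, if
`Hom(gr_i, gr_i)` is one-dimensional over `C`, then so is `Hom(F_iD, gr_i)`. -/
theorem stmt8 (C : Type*) [Field C] {𝒜 : Type*} [Category 𝒜] [Abelian 𝒜] [Linear C 𝒜]
    (D : 𝒜) (l : ℕ) (F : Fin (l + 1) → Subobject D) (hmono : Monotone F)
    (h0 : F 0 = ⊥) (htop : F (Fin.last l) = ⊤) (i : Fin l)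
    (hvanish : ∀ j : Fin l, j < i → ∀ f : stmtGr F hmono j ⟶ stmtGr F hmono i, f = 0) :
    Function.Bijective (fun φ : (stmtGr F hmono i ⟶ stmtGr F hmono i) =>
      cokernel.π (Subobject.ofLE (F i.castSucc) (F i.succ)
        (hmono (Fin.castSucc_le_succ i))) ≫ φ) ∧
    (Module.finrank C (stmtGr F hmono i ⟶ stmtGr F hmono i) = 1 →
      Module.finrank C (((F i.succ : 𝒜)) ⟶ stmtGr F hmono i) = 1) := by
  have hbij := stmt8_general F hmono C h0 i hvanish
  exact ⟨hbij, (LinearEquiv.ofBijective _ hbij).finrank_eq.symm.trans⟩
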